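/- arXiv:2007.02607 — 2 statements merged into one kernel-verified Lean document; each statement's English description precedes it below -/
import Mathlib

section
/- Let u : ℝ³ → ℝ³ be a smooth vector field with div u = 0 on ℝ³ satisfying the Navier-slip boundary condition (u₃ = ∂₃u₁ = ∂₃u₂ = 0 at every point of ∂Ω), and set ω = curl u. Then curl(ω × u) × n = ((u·∇)ω − (ω·∇)u) × n = 0 on ∂Ω; that is, the first and second components of (u·∇)ω − (ω·∇)u vanish at every point of ∂Ω. -/
noncomputable section

open MeasureTheory

/-- Points/vectors in ℝ³, indexed by `Fin 3` (so index `0,1,2` stand for coordinates `1,2,3`). -/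
abbrev V3 : Type := Fin 3 → ℝ

/-- Partial derivative in the `i`-th coordinate direction. -/
def pd (i : Fin 3) (f : V3 → ℝ) (x : V3) : ℝ := fderiv ℝ f x (Pi.single i 1)

/-- Divergence of a vector field. -/
def vdiv (u : V3 → V3) (x : V3) : ℝ :=
  pd 0 (fun y => u y 0) x + pd 1 (fun y => u y 1) x + pd 2 (fun y => u y 2) x

/-- Curl of a vector field. -/
def vcurl (u : V3 → V3) (x : V3) : V3 :=
  ![pd 1 (fun y => u y 2) x - pd 2 (fun y => u y 1) x,
    pd 2 (fun y => u y 0) x - pd 0 (fun y => u y 2) x,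
    pd 0 (fun y => u y 1) x - pd 1 (fun y => u y 0) x]

/-- Laplacian of a scalar function. -/
def lap (f : V3 → ℝ) (x : V3) : ℝ :=
  pd 0 (pd 0 f) x + pd 1 (pd 1 f) x + pd 2 (pd 2 f) x

/-- Componentwise Laplacian of a vector field. -/
def vlap (u : V3 → V3) (x : V3) : V3 := fun i => lap (fun y => u y i) x

/-- Advective derivative `(u·∇)V`. -/
def adv (u V : V3 → V3) (x : V3) : V3 := fun i =>
  u x 0 * pd 0 (fun y => V y i) x + u x 1 * pd 1 (fun y => V y i) x +
    u x 2 * pd 2 (fun y => V y i) x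

/-- Cross product in ℝ³. -/
def cross (a b : V3) : V3 :=
  ![a 1 * b 2 - a 2 * b 1, a 2 * b 0 - a 0 * b 2, a 0 * b 1 - a 1 * b 0]

/-- Dot product in ℝ³. -/
def dot (a b : V3) : ℝ := a 0 * b 0 + a 1 * b 1 + a 2 * b 2

/-- Gradient of a scalar function. -/
def grad (f : V3 → ℝ) (x : V3) : V3 := fun i => pd i f x

/-- The boundary `∂Ω = {x : x₃ = 0 or x₃ = 1}`. -/
def onBdry (x : V3) : Prop := x 2 = 0 ∨ x 2 = 1

/-- Horizontal periodicity (period 1 in x₁ and x₂) of a scalar function. -/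
def hperS (f : V3 → ℝ) : Prop :=
  (∀ x, f (x + Pi.single 0 1) = f x) ∧ (∀ x, f (x + Pi.single 1 1) = f x)

/-- Horizontal periodicity (period 1 in x₁ and x₂) of a vector field. -/
def hperV (u : V3 → V3) : Prop :=
  (∀ x, u (x + Pi.single 0 1) = u x) ∧ (∀ x, u (x + Pi.single 1 1) = u x)

/-- The unit cube `Q = [0,1]³`. -/
def Q3 : Set V3 := Set.Icc 0 1

/-- Tangential derivatives of a function vanishing on the boundary vanish on the boundary. -/
theorem pd_tangential (f : V3 → ℝ) (hf : ∀ x, onBdry x → f x = 0) (i : Fin 3) (hi : i ≠ 2)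
    (x : V3) (hx : onBdry x) : pd i f x = 0 := by
  unfold pd
  by_cases hd : DifferentiableAt ℝ f x
  · rw [← hd.lineDeriv_eq_fderiv]
    unfold lineDeriv
    have h : (fun t : ℝ => f (x + t • (Pi.single i 1 : V3))) = fun _ => 0 := by
      funext t
      apply hf
      have h2 : (x + t • (Pi.single i 1 : V3)) 2 = x 2 := by
        simp [Pi.single_apply, hi.symm]
      unfold onBdry
      rw [h2]
      exact hx
    rw [h]
    simp
  · rw [fderiv_zero_of_not_differentiableAt hd]
    simp

/-- Lemma 5.1, second part: for divergence-free `u` with the Navier-slip b.c. and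
`ω = curl u`, one has `curl(ω × u) × n = ((u·∇)ω − (ω·∇)u) × n = 0` on `∂Ω`. -/
theorem stmt_1 (u : V3 → V3)
    (hu : ContDiff ℝ (⊤ : ℕ∞) u)
    (hdivu : ∀ x, vdiv u x = 0)
    (hubc : ∀ x, onBdry x →
      u x 2 = 0 ∧ pd 2 (fun y => u y 0) x = 0 ∧ pd 2 (fun y => u y 1) x = 0) :
    ∀ x, onBdry x →
      (adv u (vcurl u) x - adv (vcurl u) u x) 0 = 0 ∧
      (adv u (vcurl u) x - adv (vcurl u) u x) 1 = 0 := by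
  have h3 : ∀ i : Fin 3, i ≠ 2 → ∀ x, onBdry x → pd i (fun y => u y 2) x = 0 :=
    fun i hi x hx => pd_tangential _ (fun y hy => (hubc y hy).1) i hi x hx
  have w0 : ∀ x, onBdry x → vcurl u x 0 = 0 := by
    intro x hx
    simp [vcurl, h3 1 (by decide) x hx, (hubc x hx).2.2]
  have w1 : ∀ x, onBdry x → vcurl u x 1 = 0 := by
    intro x hx
    simp [vcurl, h3 0 (by decide) x hx, (hubc x hx).2.1]
  intro x hx
  obtain ⟨a, b, c⟩ := hubc x hx
  have t := fun i hi => pd_tangential (fun y => vcurl u y 0) w0 i hi x hx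
  have t' := fun i hi => pd_tangential (fun y => vcurl u y 1) w1 i hi x hx
  constructor
  · simp only [Pi.sub_apply, adv, a, b, w0 x hx, w1 x hx, t 0 (by decide), t 1 (by decide)]
    ring
  · simp only [Pi.sub_apply, adv, a, c, w0 x hx, w1 x hx, t' 0 (by decide), t' 1 (by decide)]
    ring
end
end

section
/- Let u, B : ℝ³ → ℝ³ be smooth vector fields with div u = 0 and div B = 0 on ℝ³. Assume u satisfies the Navier-slip boundary condition (u₃ = ∂₃u₁ = ∂₃u₂ = 0 on ∂Ω), B satisfies the insulating boundary condition (B₁ = B₂ = 0 on ∂Ω), (ΔB)₁ = (ΔB)₂ = 0 at every point of ∂Ω, and moreover Δω × n = 0 on ∂Ω where ω = curl u (i.e. (Δ curl u)₁ = (Δ curl u)₂ = 0 at every point of ∂Ω). Then (curl)³(B × u) × n = 0 on ∂Ω; explicitly, since curl(B × u) = (u·∇)B − (B·∇)u and (curl)³(B × u) = −Δ((u·∇)B − (B·∇)u), the first and second components of Δ((u·∇)B − (B·∇)u) vanish at every point of ∂Ω. -/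
noncomputable section

open MeasureTheory

/-- Smooth scalar functions. -/
def Sm (f : V3 → ℝ) : Prop := ContDiff ℝ (⊤ : ℕ∞) f

/-- Vanishing on the boundary. -/
def Zb (f : V3 → ℝ) : Prop := ∀ x, onBdry x → f x = 0

/-- Formally odd (to second order) at the boundary. -/
def Od (f : V3 → ℝ) : Prop := Sm f ∧ Zb f ∧ Zb (pd 2 (pd 2 f))

/-- Formally even (to first order) at the boundary. -/
def Ev (f : V3 → ℝ) : Prop := Sm f ∧ Zb (pd 2 f)

theorem Sm.diff {f : V3 → ℝ} (hf : Sm f) : Differentiable ℝ f :=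
  ContDiff.differentiable hf (by simp)

theorem Sm.pd {f : V3 → ℝ} (hf : Sm f) (i : Fin 3) : Sm (pd i f) := by
  have h : ContDiff ℝ (⊤ : ℕ∞) (fderiv ℝ f) := ContDiff.fderiv_right hf (by simp)
  exact h.clm_apply contDiff_const

theorem Sm.add {f g : V3 → ℝ} (hf : Sm f) (hg : Sm g) : Sm (fun y => f y + g y) :=
  ContDiff.add hf hg

theorem Sm.sub {f g : V3 → ℝ} (hf : Sm f) (hg : Sm g) : Sm (fun y => f y - g y) :=
  ContDiff.sub hf hg

theorem Sm.mul {f g : V3 → ℝ} (hf : Sm f) (hg : Sm g) : Sm (fun y => f y * g y) :=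
  ContDiff.mul hf hg

theorem pd_add {f g : V3 → ℝ} (hf : Sm f) (hg : Sm g) (i : Fin 3) :
    pd i (fun y => f y + g y) = fun y => pd i f y + pd i g y := by
  funext x
  simp only [pd]
  rw [fderiv_fun_add (hf.diff x) (hg.diff x)]
  simp

theorem pd_sub {f g : V3 → ℝ} (hf : Sm f) (hg : Sm g) (i : Fin 3) :
    pd i (fun y => f y - g y) = fun y => pd i f y - pd i g y := by
  funext x
  simp only [pd]
  rw [fderiv_fun_sub (hf.diff x) (hg.diff x)]
  simp

theorem pd_mul {f g : V3 → ℝ} (hf : Sm f) (hg : Sm g) (i : Fin 3) :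
    pd i (fun y => f y * g y) = fun y => f y * pd i g y + g y * pd i f y := by
  funext x
  simp only [pd]
  rw [fderiv_fun_mul (hf.diff x) (hg.diff x)]
  simp

theorem pd_comm {f : V3 → ℝ} (hf : Sm f) (i j : Fin 3) : pd i (pd j f) = pd j (pd i f) := by
  funext x
  have h : ContDiff ℝ (⊤ : ℕ∞) (fderiv ℝ f) := ContDiff.fderiv_right hf (by simp)
  have hd : DifferentiableAt ℝ (fderiv ℝ f) x := h.differentiable (by simp) x
  have key : ∀ a b : Fin 3, pd a (pd b f) x
      = fderiv ℝ (fderiv ℝ f) x (Pi.single a 1) (Pi.single b 1) := by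
    intro a b
    change fderiv ℝ (fun y => fderiv ℝ f y (Pi.single b 1)) x (Pi.single a 1) = _
    rw [fderiv_clm_apply hd (differentiableAt_const _)]
    simp
  rw [key, key]
  have hs : IsSymmSndFDerivAt ℝ f x := (ContDiff.contDiffAt hf).isSymmSndFDerivAt (by
    simp only [minSmoothness_of_isRCLikeNormedField]
    exact WithTop.coe_le_coe.2 le_top)
  exact hs _ _

theorem Zb.pd {f : V3 → ℝ} (hf : Sm f) (hz : Zb f) {i : Fin 3} (hi : i ≠ 2) : Zb (pd i f) := by
  intro x hx
  have hl : HasDerivAt (fun t : ℝ => x + t • (Pi.single i 1 : V3)) (Pi.single i 1) 0 := by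
    simpa using ((hasDerivAt_id (0 : ℝ)).smul_const (Pi.single i 1 : V3)).const_add x
  have hfx : HasFDerivAt f (fderiv ℝ f x) (x + (0 : ℝ) • (Pi.single i 1 : V3)) := by
    simpa using (hf.diff x).hasFDerivAt
  have hc := hfx.comp_hasDerivAt (0 : ℝ) hl
  have h0 : (f ∘ fun t : ℝ => x + t • (Pi.single i 1 : V3)) = fun _ => 0 := by
    funext t
    apply hz
    simpa [onBdry, Pi.single_apply, hi.symm] using hx
  rw [h0] at hc
  exact hc.unique (hasDerivAt_const _ _)

theorem Od.pd {f : V3 → ℝ} (hf : Od f) {i : Fin 3} (hi : i ≠ 2) : Od (pd i f) := by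
  obtain ⟨h1, h2, h3⟩ := hf
  refine ⟨h1.pd i, h2.pd h1 hi, ?_⟩
  rw [pd_comm h1 2 i, pd_comm (h1.pd 2) 2 i]
  exact h3.pd ((h1.pd 2).pd 2) hi

theorem Ev.pd {f : V3 → ℝ} (hf : Ev f) {i : Fin 3} (hi : i ≠ 2) : Ev (pd i f) := by
  obtain ⟨h1, h2⟩ := hf
  refine ⟨h1.pd i, ?_⟩
  rw [pd_comm h1 2 i]
  exact h2.pd (h1.pd 2) hi

theorem Od.ev {f : V3 → ℝ} (hf : Od f) : Ev (_root_.pd 2 f) := ⟨hf.1.pd 2, hf.2.2⟩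

theorem Od.add {f g : V3 → ℝ} (hf : Od f) (hg : Od g) : Od (fun y => f y + g y) := by
  refine ⟨hf.1.add hg.1, fun x hx => ?_, fun x hx => ?_⟩
  · simp [hf.2.1 x hx, hg.2.1 x hx]
  · rw [pd_add hf.1 hg.1, pd_add (hf.1.pd 2) (hg.1.pd 2)]
    simp [hf.2.2 x hx, hg.2.2 x hx]

theorem Od.sub {f g : V3 → ℝ} (hf : Od f) (hg : Od g) : Od (fun y => f y - g y) := by
  refine ⟨hf.1.sub hg.1, fun x hx => ?_, fun x hx => ?_⟩
  · simp [hf.2.1 x hx, hg.2.1 x hx]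
  · rw [pd_sub hf.1 hg.1, pd_sub (hf.1.pd 2) (hg.1.pd 2)]
    simp [hf.2.2 x hx, hg.2.2 x hx]

theorem Od.mul {f g : V3 → ℝ} (hf : Od f) (hg : Ev g) : Od (fun y => f y * g y) := by
  refine ⟨hf.1.mul hg.1, fun x hx => ?_, fun x hx => ?_⟩
  · simp [hf.2.1 x hx]
  · rw [pd_mul hf.1 hg.1, pd_add (hf.1.mul (hg.1.pd 2)) (hg.1.mul (hf.1.pd 2)),
      pd_mul hf.1 (hg.1.pd 2), pd_mul hg.1 (hf.1.pd 2)]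
    simp [hf.2.1 x hx, hf.2.2 x hx, hg.2 x hx]

theorem Ev.mul {f g : V3 → ℝ} (hf : Ev f) (hg : Od g) : Od (fun y => f y * g y) := by
  have h := hg.mul hf
  simpa only [mul_comm] using h

theorem Od.lap {f : V3 → ℝ} (hf : Od f) : Zb (lap f) := by
  intro x hx
  have h0 := (hf.pd (i := 0) (by decide)).pd (i := 0) (by decide)
  have h1 := (hf.pd (i := 1) (by decide)).pd (i := 1) (by decide)
  simp [_root_.lap, h0.2.1 x hx, h1.2.1 x hx, hf.2.2 x hx]

theorem Od.of_lap {f : V3 → ℝ} (hs : Sm f) (hz : Zb f) (hl : Zb (_root_.lap f)) : Od f := by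
  refine ⟨hs, hz, fun x hx => ?_⟩
  have h0 := Zb.pd (hs.pd 0) (Zb.pd hs hz (i := 0) (by decide)) (i := 0) (by decide) x hx
  have h1 := Zb.pd (hs.pd 1) (Zb.pd hs hz (i := 1) (by decide)) (i := 1) (by decide) x hx
  have h := hl x hx
  simp only [_root_.lap, h0, h1] at h
  linarith

theorem lap_sub {f g : V3 → ℝ} (hf : Sm f) (hg : Sm g) (x : V3) :
    lap (fun y => f y - g y) x = lap f x - lap g x := by
  simp only [lap]
  rw [pd_sub hf hg, pd_sub hf hg, pd_sub hf hg, pd_sub (hf.pd _) (hg.pd _),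
    pd_sub (hf.pd _) (hg.pd _), pd_sub (hf.pd _) (hg.pd _)]
  ring

/-- The normal component: if `a + b + ∂₃ f = 0` with `a, b` having vanishing normal derivative
then `∂₃∂₃ f` vanishes. -/
theorem Zb.dd {a b f : V3 → ℝ} (ha : Ev a) (hb : Ev b)
    (h : ∀ x, a x + b x + _root_.pd 2 f x = 0) : Zb (_root_.pd 2 (_root_.pd 2 f)) := by
  intro x hx
  have e : _root_.pd 2 f = fun y => (fun z => a z - a z) y - (a y + b y) := by
    funext y; have := h y; simp; linarith
  rw [e, pd_sub (ha.1.sub ha.1) (ha.1.add hb.1), pd_add ha.1 hb.1, pd_sub ha.1 ha.1]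
  simp [ha.2 x hx, hb.2 x hx]

theorem od_adv {u B : V3 → V3} (hu0 : Ev (fun y => u y 0)) (hu1 : Ev (fun y => u y 1))
    (hu2 : Od (fun y => u y 2)) (hB0 : Od (fun y => B y 0)) (hB1 : Od (fun y => B y 1))
    (hB2 : Ev (fun y => B y 2)) (i : Fin 3) (hui : Ev (fun y => u y i))
    (hui' : Od (pd 2 (fun y => u y i))) (hBi : Od (fun y => B y i)) :
    Od (fun y => (adv u B y - adv B u y) i) := by
  have h0 : (0 : Fin 3) ≠ 2 := by decide
  have h1 : (1 : Fin 3) ≠ 2 := by decide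
  exact (((hu0.mul (hBi.pd h0)).add (hu1.mul (hBi.pd h1))).add (hu2.mul hBi.ev)).sub
    (((hB0.mul (hui.pd h0)).add (hB1.mul (hui.pd h1))).add (hB2.mul hui'))

/-- Lemma 5.3: under the Navier-slip b.c. for `u`, the insulating b.c. for `B`,
`ΔB × n = 0` and `Δ(curl u) × n = 0` on `∂Ω`, one has `(curl)³(B × u) × n = 0` on `∂Ω`;
explicitly, the first and second components of `Δ((u·∇)B − (B·∇)u)` vanish on `∂Ω`. -/
theorem stmt_3 (u B : V3 → V3)
    (hu : ContDiff ℝ (⊤ : ℕ∞) u) (hB : ContDiff ℝ (⊤ : ℕ∞) B)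
    (hdivu : ∀ x, vdiv u x = 0) (hdivB : ∀ x, vdiv B x = 0)
    (hubc : ∀ x, onBdry x →
      u x 2 = 0 ∧ pd 2 (fun y => u y 0) x = 0 ∧ pd 2 (fun y => u y 1) x = 0)
    (hBbc : ∀ x, onBdry x → B x 0 = 0 ∧ B x 1 = 0)
    (hlapB : ∀ x, onBdry x → vlap B x 0 = 0 ∧ vlap B x 1 = 0)
    (hlapcurlu : ∀ x, onBdry x →
      vlap (vcurl u) x 0 = 0 ∧ vlap (vcurl u) x 1 = 0) :
    ∀ x, onBdry x →
      vlap (fun y => adv u B y - adv B u y) x 0 = 0 ∧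
      vlap (fun y => adv u B y - adv B u y) x 1 = 0 := by
  have su : ∀ i, Sm (fun y => u y i) := fun i => contDiff_pi.1 hu i
  have sB : ∀ i, Sm (fun y => B y i) := fun i => contDiff_pi.1 hB i
  have h0 : (0 : Fin 3) ≠ 2 := by decide
  have h1 : (1 : Fin 3) ≠ 2 := by decide
  have eu0 : Ev (fun y => u y 0) := ⟨su 0, fun x hx => (hubc x hx).2.1⟩
  have eu1 : Ev (fun y => u y 1) := ⟨su 1, fun x hx => (hubc x hx).2.2⟩
  have ou2 : Od (fun y => u y 2) := ⟨su 2, fun x hx => (hubc x hx).1,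
    Zb.dd (eu0.pd h0) (eu1.pd h1) hdivu⟩
  have oB0 : Od (fun y => B y 0) :=
    Od.of_lap (sB 0) (fun x hx => (hBbc x hx).1) (fun x hx => (hlapB x hx).1)
  have oB1 : Od (fun y => B y 1) :=
    Od.of_lap (sB 1) (fun x hx => (hBbc x hx).2) (fun x hx => (hlapB x hx).2)
  have eB2 : Ev (fun y => B y 2) := by
    refine ⟨sB 2, fun x hx => ?_⟩
    have h := hdivB x
    have a := (oB0.pd h0).2.1 x hx
    have b := (oB1.pd h1).2.1 x hx
    simp only [vdiv, a, b] at h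
    linarith
  have du0 : Od (pd 2 (fun y => u y 0)) := by
    refine Od.of_lap ((su 0).pd 2) eu0.2 (fun x hx => ?_)
    have h := (hlapcurlu x hx).2
    change lap (fun y => pd 2 (fun y => u y 0) y - pd 0 (fun y => u y 2) y) x = 0 at h
    rw [lap_sub ((su 0).pd 2) ((su 2).pd 0), (ou2.pd h0).lap x hx] at h
    linarith
  have du1 : Od (pd 2 (fun y => u y 1)) := by
    refine Od.of_lap ((su 1).pd 2) eu1.2 (fun x hx => ?_)
    have h := (hlapcurlu x hx).1
    change lap (fun y => pd 1 (fun y => u y 2) y - pd 2 (fun y => u y 1) y) x = 0 at h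
    rw [lap_sub ((su 2).pd 1) ((su 1).pd 2), (ou2.pd h1).lap x hx] at h
    linarith
  intro x hx
  exact ⟨(od_adv eu0 eu1 ou2 oB0 oB1 eB2 0 eu0 du0 oB0).lap x hx,
    (od_adv eu0 eu1 ou2 oB0 oB1 eB2 1 eu1 du1 oB1).lap x hx⟩
end
end
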